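/- Let I be a *-homogeneous ideal of D. Then the set M(I) = {x ∈ D : (xD + I)* ≠ D} is a maximal *-ideal of D containing I, and it is the unique maximal *-ideal of D containing I. -/

import Mathlib

open scoped nonZeroDivisors

/-- A star operation on the nonzero fractional ideals of an integral domain `D`
with quotient field `K`: it fixes nonzero principal fractional ideals, commutes with
multiplication by nonzero principal fractional ideals, is extensive, monotone and
idempotent (on nonzero fractional ideals). -/
structure StarOperation (D K : Type*) [CommRing D] [IsDomain D] [Field K]
    [Algebra D K] [IsFractionRing D K] where
  star : FractionalIdeal D⁰ K → FractionalIdeal D⁰ K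
  star_spanSingleton : ∀ x : K, x ≠ 0 →
    star (FractionalIdeal.spanSingleton D⁰ x) = FractionalIdeal.spanSingleton D⁰ x
  star_smul : ∀ (x : K) (I : FractionalIdeal D⁰ K), x ≠ 0 → I ≠ 0 →
    star (FractionalIdeal.spanSingleton D⁰ x * I) = FractionalIdeal.spanSingleton D⁰ x * star I
  le_star : ∀ I : FractionalIdeal D⁰ K, I ≠ 0 → I ≤ star I
  star_mono : ∀ I J : FractionalIdeal D⁰ K, I ≠ 0 → J ≠ 0 → I ≤ J → star I ≤ star J
  star_idem : ∀ I : FractionalIdeal D⁰ K, I ≠ 0 → star (star I) = star I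

namespace StarOperation

variable {D K : Type*} [CommRing D] [IsDomain D] [Field K] [Algebra D K] [IsFractionRing D K]
variable (s : StarOperation D K)

/-- `*` has finite character: for every nonzero fractional ideal `I`, `I^*` is the union
of `J^*` over the nonzero finitely generated fractional subideals `J` of `I`. -/
def FiniteCharacter : Prop :=
  ∀ I : FractionalIdeal D⁰ K, I ≠ 0 → ∀ x ∈ s.star I,
    ∃ J : FractionalIdeal D⁰ K, J ≠ 0 ∧ (J : Submodule D K).FG ∧ J ≤ I ∧ x ∈ s.star J

/-- A (nonzero) integral ideal `I` of `D` is a `*`-ideal if `I^* = I`. -/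
def IsStarIdeal (I : Ideal D) : Prop :=
  I ≠ ⊥ ∧ s.star (I : FractionalIdeal D⁰ K) = (I : FractionalIdeal D⁰ K)

/-- An integral ideal `I` of `D` is a `*`-ideal of finite type if `I = J^*` for some
nonzero finitely generated ideal `J`. -/
def IsFiniteTypeStarIdeal (I : Ideal D) : Prop :=
  ∃ J : Ideal D, J ≠ ⊥ ∧ J.FG ∧
    s.star (J : FractionalIdeal D⁰ K) = (I : FractionalIdeal D⁰ K)

/-- A maximal `*`-ideal: maximal among proper integral `*`-ideals. -/
def IsMaxStarIdeal (M : Ideal D) : Prop :=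
  M ≠ ⊤ ∧ s.IsStarIdeal M ∧ ∀ J : Ideal D, J ≠ ⊤ → s.IsStarIdeal J → M ≤ J → J = M

/-- `I` is `*`-homogeneous: a proper `*`-ideal of finite type such that `(J + J')^* ≠ D`
for every pair `J`, `J'` of proper `*`-ideals of finite type containing `I`. -/
def IsHomog (I : Ideal D) : Prop :=
  I ≠ ⊤ ∧ s.IsStarIdeal I ∧ s.IsFiniteTypeStarIdeal I ∧
    ∀ J J' : Ideal D, J ≠ ⊤ → J' ≠ ⊤ → s.IsStarIdeal J → s.IsStarIdeal J' →
      s.IsFiniteTypeStarIdeal J → s.IsFiniteTypeStarIdeal J' → I ≤ J → I ≤ J' →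
      s.star ((J + J' : Ideal D) : FractionalIdeal D⁰ K) ≠ 1

/-- The set `M(I) = {x ∈ D : (xD + I)^* ≠ D}` attached to an ideal `I`. -/
def MSet (I : Ideal D) : Set D :=
  {x : D | s.star ((Ideal.span {x} + I : Ideal D) : FractionalIdeal D⁰ K) ≠ 1}

/-- `A` and `B` are `*`-comaximal if `(A + B)^* = D`. -/
def StarComaximal (A B : Ideal D) : Prop :=
  s.star ((A + B : Ideal D) : FractionalIdeal D⁰ K) = 1

/-- An integral ideal `I` is `*`-invertible if `(I · I⁻¹)^* = D`. -/
def StarInvertible (I : Ideal D) : Prop :=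
  s.star ((I : FractionalIdeal D⁰ K) * (I : FractionalIdeal D⁰ K)⁻¹) = 1

/-- `D` is a `*`-SH domain: every principal ideal generated by a nonzero nonunit is a
`*`-product of finitely many `*`-homogeneous ideals. -/
def IsSHDomain : Prop :=
  ∀ x : D, x ≠ 0 → ¬IsUnit x →
    ∃ T : Multiset (Ideal D), (∀ J ∈ T, s.IsHomog J) ∧
      s.star ((T.prod : Ideal D) : FractionalIdeal D⁰ K) =
        ((Ideal.span {x} : Ideal D) : FractionalIdeal D⁰ K)

/-- `D` has finite `*`-character: every nonzero nonunit lies in only finitely many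
maximal `*`-ideals. -/
def FiniteStarCharacter : Prop :=
  ∀ x : D, x ≠ 0 → ¬IsUnit x → {P : Ideal D | s.IsMaxStarIdeal P ∧ x ∈ P}.Finite

end StarOperation

/-!
On integral ideals a star operation is a closure operator `c`, and `M(I)` is the set of `x` with
`c (⟨x⟩ ⊔ I) ≠ ⊤`. The proper closed ideals of finite type containing `I` are exactly the proper
`c (F ⊔ I)` with `F` finitely generated, so homogeneity says that properness of `c (F ⊔ I)` and
`c (G ⊔ I)` gives properness of `c (F ⊔ G ⊔ I)`. Hence `M(I)` is an ideal and `c (F ⊔ I)` is proper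
for every finitely generated `F ≤ M(I)`; by finite character `M(I)` is then closed. Any proper
closed ideal containing `I` lies in `M(I)`, which is therefore the greatest such ideal.
-/

section ClosureOperator

variable {R : Type*} [Semiring R] {c : ClosureOperator (Ideal R)} {I : Ideal R}

/-- A closure operator on ideals is of finite character if every closure is the union of the
closures of finitely generated subideals. -/
def IsFinitaryClosure (c : ClosureOperator (Ideal R)) : Prop :=
  ∀ (A : Ideal R), ∀ x ∈ c A, ∃ B ≤ A, B.FG ∧ x ∈ c B

/-- Homogeneity of an ideal with respect to a closure operator `c`. Closed ideals of finite type
containing `I` are encoded by finitely generated ideals `F`, through `c (F ⊔ I)`. -/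
structure IsClosureHomogeneous (c : ClosureOperator (Ideal R)) (I : Ideal R) : Prop where
  closure_ne_top : c I ≠ ⊤
  closure_sup_ne_top : ∀ F G : Ideal R, F.FG → G.FG →
    c (F ⊔ I) ≠ ⊤ → c (G ⊔ I) ≠ ⊤ → c (F ⊔ G ⊔ I) ≠ ⊤

namespace IsClosureHomogeneous

/-- The ideal `M(I)` of a homogeneous ideal `I`: the elements whose adjunction to `I` generates a
proper closed ideal. -/
def maxClosedIdeal (h : IsClosureHomogeneous c I) : Ideal R where
  carrier := {x | c (Ideal.span {x} ⊔ I) ≠ ⊤}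
  zero_mem' := by simpa using h.closure_ne_top
  add_mem' {x y} hx hy := by
    have hxy : Ideal.span {x + y} ≤ Ideal.span {x} ⊔ Ideal.span {y} :=
      (Ideal.span_singleton_le_iff_mem _).mpr <| Submodule.add_mem_sup
        (Ideal.mem_span_singleton_self x) (Ideal.mem_span_singleton_self y)
    exact ne_top_of_le_ne_top
      (h.closure_sup_ne_top _ _ (Submodule.fg_span_singleton x) (Submodule.fg_span_singleton y)
        hx hy)
      (c.monotone (sup_le_sup_right hxy I))
  smul_mem' a x hx := by
    have hax : Ideal.span {a • x} ≤ Ideal.span {x} :=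
      (Ideal.span_singleton_le_iff_mem _).mpr <|
        Ideal.mul_mem_left _ a (Ideal.mem_span_singleton_self x)
    exact ne_top_of_le_ne_top hx (c.monotone (sup_le_sup_right hax I))

theorem mem_maxClosedIdeal (h : IsClosureHomogeneous c I) {x : R} :
    x ∈ h.maxClosedIdeal ↔ c (Ideal.span {x} ⊔ I) ≠ ⊤ :=
  Iff.rfl

theorem closure_sup_ne_top_of_le_maxClosedIdeal (h : IsClosureHomogeneous c I) {F : Ideal R}
    (hF : F.FG) (hFM : F ≤ h.maxClosedIdeal) : c (F ⊔ I) ≠ ⊤ := by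
  induction F, hF using Submodule.fg_induction with
  | singleton x => exact h.mem_maxClosedIdeal.mp (hFM (Ideal.mem_span_singleton_self x))
  | sup F G hF hG ihF ihG =>
    exact h.closure_sup_ne_top F G hF hG (ihF (le_sup_left.trans hFM))
      (ihG (le_sup_right.trans hFM))

theorem isClosed_maxClosedIdeal (h : IsClosureHomogeneous c I) (hc : IsFinitaryClosure c) :
    c.IsClosed h.maxClosedIdeal := by
  refine c.isClosed_iff_closure_le.mpr fun x hx => h.mem_maxClosedIdeal.mpr ?_
  obtain ⟨F, hFM, hF, hxF⟩ := hc _ x hx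
  have hle : c (Ideal.span {x} ⊔ I) ≤ c (F ⊔ I) := calc
    c (Ideal.span {x} ⊔ I) ≤ c (c F ⊔ I) :=
      c.monotone (sup_le_sup_right ((Ideal.span_singleton_le_iff_mem _).mpr hxF) I)
    _ = c (F ⊔ I) := c.closure_sup_closure_left F I
  exact ne_top_of_le_ne_top (h.closure_sup_ne_top_of_le_maxClosedIdeal hF hFM) hle

theorem maxClosedIdeal_ne_top (h : IsClosureHomogeneous c I) : h.maxClosedIdeal ≠ ⊤ := by
  rw [Ideal.ne_top_iff_one, h.mem_maxClosedIdeal]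
  simp

theorem le_maxClosedIdeal (h : IsClosureHomogeneous c I) {J : Ideal R} (hJ : c.IsClosed J)
    (hJtop : J ≠ ⊤) (hIJ : I ≤ J) : J ≤ h.maxClosedIdeal := fun _ hx =>
  ne_top_of_le_ne_top hJtop <|
    c.closure_min (sup_le ((Ideal.span_singleton_le_iff_mem _).mpr hx) hIJ) hJ

theorem isGreatest_maxClosedIdeal (h : IsClosureHomogeneous c I) (hc : IsFinitaryClosure c) :
    IsGreatest {J | c.IsClosed J ∧ J ≠ ⊤ ∧ I ≤ J} h.maxClosedIdeal :=
  ⟨⟨h.isClosed_maxClosedIdeal hc, h.maxClosedIdeal_ne_top, (c.le_closure I).trans <|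
      h.le_maxClosedIdeal (c.isClosed_closure I) h.closure_ne_top (c.le_closure I)⟩,
    fun _ hJ => h.le_maxClosedIdeal hJ.1 hJ.2.1 hJ.2.2⟩

end IsClosureHomogeneous

end ClosureOperator

namespace StarOperation

variable {D K : Type*} [CommRing D] [IsDomain D] [Field K] [Algebra D K] [IsFractionRing D K]
variable (s : StarOperation D K) {A : Ideal D}

theorem star_one : s.star 1 = 1 := by
  simpa only [FractionalIdeal.spanSingleton_one] using s.star_spanSingleton 1 one_ne_zero

theorem star_coeIdeal_le_one (hA : A ≠ ⊥) : s.star (A : FractionalIdeal D⁰ K) ≤ 1 :=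
  (s.star_mono _ _ (FractionalIdeal.coeIdeal_ne_zero.mpr hA) one_ne_zero
    FractionalIdeal.coeIdeal_le_one).trans_eq s.star_one

open Classical in
/-- The ideal `A^*` of `D`. The star operation says nothing about the zero fractional ideal, so
`⊥` is sent to `⊥`. -/
noncomputable def starIdeal (A : Ideal D) : Ideal D :=
  if A = ⊥ then ⊥
  else (s.star (A : FractionalIdeal D⁰ K) : Submodule D K).comap (Algebra.linearMap D K)

theorem starIdeal_bot : s.starIdeal ⊥ = ⊥ :=
  if_pos rfl

theorem mem_starIdeal (hA : A ≠ ⊥) {x : D} :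
    x ∈ s.starIdeal A ↔ algebraMap D K x ∈ s.star (A : FractionalIdeal D⁰ K) := by
  rw [starIdeal, if_neg hA]
  rfl

theorem coe_starIdeal (hA : A ≠ ⊥) :
    (s.starIdeal A : FractionalIdeal D⁰ K) = s.star (A : FractionalIdeal D⁰ K) := by
  obtain ⟨B, hB⟩ := FractionalIdeal.le_one_iff_exists_coeIdeal.mp (s.star_coeIdeal_le_one hA)
  have hAB : s.starIdeal A = B := by
    ext x
    rw [s.mem_starIdeal hA, ← hB]
    simp [FractionalIdeal.mem_coeIdeal]
  rw [hAB, hB]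

theorem le_starIdeal (A : Ideal D) : A ≤ s.starIdeal A := by
  rcases eq_or_ne A ⊥ with rfl | hA
  · exact bot_le
  · rw [← FractionalIdeal.coeIdeal_le_coeIdeal K, s.coe_starIdeal hA]
    exact s.le_star _ (FractionalIdeal.coeIdeal_ne_zero.mpr hA)

theorem starIdeal_le_starIdeal {A B : Ideal D} (h : A ≤ s.starIdeal B) :
    s.starIdeal A ≤ s.starIdeal B := by
  rcases eq_or_ne A ⊥ with rfl | hA
  · exact s.starIdeal_bot.trans_le bot_le
  have hB : B ≠ ⊥ := by
    rintro rfl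
    exact hA (le_bot_iff.mp (h.trans_eq s.starIdeal_bot))
  have hA' : (A : FractionalIdeal D⁰ K) ≠ 0 := FractionalIdeal.coeIdeal_ne_zero.mpr hA
  have hB' : (B : FractionalIdeal D⁰ K) ≠ 0 := FractionalIdeal.coeIdeal_ne_zero.mpr hB
  rw [← FractionalIdeal.coeIdeal_le_coeIdeal K, s.coe_starIdeal hB] at h
  rw [← FractionalIdeal.coeIdeal_le_coeIdeal K, s.coe_starIdeal hA, s.coe_starIdeal hB]
  calc s.star (A : FractionalIdeal D⁰ K) ≤ s.star (s.star B) :=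
        s.star_mono _ _ hA' (ne_bot_of_le_ne_bot hA' h) h
    _ = s.star B := s.star_idem _ hB'

/-- The closure operator `A ↦ A^*` on the integral ideals of `D`. -/
noncomputable def idealClosure : ClosureOperator (Ideal D) :=
  ClosureOperator.mk₂ s.starIdeal s.le_starIdeal fun _ _ => s.starIdeal_le_starIdeal

theorem coe_idealClosure (hA : A ≠ ⊥) :
    (s.idealClosure A : FractionalIdeal D⁰ K) = s.star (A : FractionalIdeal D⁰ K) :=
  s.coe_starIdeal hA

theorem star_eq_coeIdeal_iff {B : Ideal D} (hA : A ≠ ⊥) :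
    s.star (A : FractionalIdeal D⁰ K) = B ↔ s.idealClosure A = B := by
  rw [← s.coe_idealClosure hA, FractionalIdeal.coeIdeal_inj]

theorem star_eq_one_iff (hA : A ≠ ⊥) :
    s.star (A : FractionalIdeal D⁰ K) = 1 ↔ s.idealClosure A = ⊤ := by
  rw [← FractionalIdeal.coeIdeal_top, s.star_eq_coeIdeal_iff hA]

theorem isStarIdeal_iff : s.IsStarIdeal A ↔ A ≠ ⊥ ∧ s.idealClosure.IsClosed A :=
  and_congr_right fun hA =>
    (s.star_eq_coeIdeal_iff hA).trans s.idealClosure.isClosed_iff.symm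

theorem isStarIdeal_idealClosure (hA : A ≠ ⊥) : s.IsStarIdeal (s.idealClosure A) :=
  s.isStarIdeal_iff.mpr
    ⟨ne_bot_of_le_ne_bot hA (s.idealClosure.le_closure A), s.idealClosure.isClosed_closure A⟩

theorem isFiniteTypeStarIdeal_iff :
    s.IsFiniteTypeStarIdeal A ↔ ∃ J : Ideal D, J ≠ ⊥ ∧ J.FG ∧ s.idealClosure J = A :=
  exists_congr fun _ => and_congr_right fun hJ => and_congr_right fun _ =>
    s.star_eq_coeIdeal_iff hJ

variable {s}

theorem IsFiniteTypeStarIdeal.idealClosure_sup (hA : s.IsFiniteTypeStarIdeal A) {F : Ideal D}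
    (hF : F.FG) : s.IsFiniteTypeStarIdeal (s.idealClosure (F ⊔ A)) := by
  obtain ⟨J, hJ, hJfg, rfl⟩ := s.isFiniteTypeStarIdeal_iff.mp hA
  exact s.isFiniteTypeStarIdeal_iff.mpr ⟨F ⊔ J, ne_bot_of_le_ne_bot hJ le_sup_right,
    Submodule.FG.sup hF hJfg, (s.idealClosure.closure_sup_closure_right F J).symm⟩

theorem FiniteCharacter.isFinitaryClosure (hs : s.FiniteCharacter) :
    IsFinitaryClosure s.idealClosure := by
  intro A x hx
  rcases eq_or_ne A ⊥ with rfl | hA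
  · exact ⟨⊥, le_rfl, Submodule.fg_bot, hx⟩
  obtain ⟨J, hJ, hJfg, hJA, hxJ⟩ :=
    hs _ (FractionalIdeal.coeIdeal_ne_zero.mpr hA) _ ((s.mem_starIdeal hA).mp hx)
  obtain ⟨B, rfl⟩ := FractionalIdeal.le_one_iff_exists_coeIdeal.mp
    (hJA.trans FractionalIdeal.coeIdeal_le_one)
  exact ⟨B, (FractionalIdeal.coeIdeal_le_coeIdeal K).mp hJA,
    (FractionalIdeal.coeIdeal_fg _ (IsFractionRing.injective D K) B).mp hJfg,
    (s.mem_starIdeal (FractionalIdeal.coeIdeal_ne_zero.mp hJ)).mpr hxJ⟩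

theorem IsHomog.isClosureHomogeneous {I : Ideal D} (hI : s.IsHomog I) :
    IsClosureHomogeneous s.idealClosure I := by
  obtain ⟨hItop, hIstar, hIfin, hIhom⟩ := hI
  obtain ⟨hIbot, hIclosed⟩ := s.isStarIdeal_iff.mp hIstar
  refine ⟨hIclosed.closure_eq.trans_ne hItop, fun F G hF hG hFI hGI => ?_⟩
  have sup_ne_bot (A : Ideal D) : A ⊔ I ≠ ⊥ := ne_bot_of_le_ne_bot hIbot le_sup_right
  have le_closure_sup (A : Ideal D) : I ≤ s.idealClosure (A ⊔ I) :=
    le_sup_right.trans (s.idealClosure.le_closure _)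
  have hFG := hIhom _ _ hFI hGI (s.isStarIdeal_idealClosure (sup_ne_bot F))
    (s.isStarIdeal_idealClosure (sup_ne_bot G)) (hIfin.idealClosure_sup hF)
    (hIfin.idealClosure_sup hG) (le_closure_sup F) (le_closure_sup G)
  rwa [Submodule.add_eq_sup, ne_eq,
    s.star_eq_one_iff (ne_bot_of_le_ne_bot hIbot ((le_closure_sup F).trans le_sup_left)),
    s.idealClosure.closure_sup_closure, ← sup_sup_distrib_right] at hFG

theorem IsHomog.coe_maxClosedIdeal {I : Ideal D} (hI : s.IsHomog I) :
    (hI.isClosureHomogeneous.maxClosedIdeal : Set D) = s.MSet I := by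
  ext x
  have hxI : Ideal.span {x} ⊔ I ≠ ⊥ := ne_bot_of_le_ne_bot hI.2.1.1 le_sup_right
  exact (s.star_eq_one_iff hxI).not.symm

end StarOperation

/-- Let `I` be a `*`-homogeneous ideal of `D`. Then
`M(I) = {x ∈ D : (xD + I)^* ≠ D}` is a maximal `*`-ideal of `D` containing `I`, and it is
the unique maximal `*`-ideal of `D` containing `I`. -/
theorem MSet_isMaxStarIdeal {D K : Type*} [CommRing D] [IsDomain D] [Field K] [Algebra D K]
    [IsFractionRing D K] (s : StarOperation D K) (hs : s.FiniteCharacter)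
    (I : Ideal D) (hI : s.IsHomog I) :
    ∃ M : Ideal D, (M : Set D) = s.MSet I ∧ s.IsMaxStarIdeal M ∧ I ≤ M ∧
      ∀ M' : Ideal D, s.IsMaxStarIdeal M' → I ≤ M' → M' = M := by
  have hM := hI.isClosureHomogeneous.isGreatest_maxClosedIdeal hs.isFinitaryClosure
  set M := hI.isClosureHomogeneous.maxClosedIdeal
  obtain ⟨⟨hMclosed, hMtop, hIM⟩, hMub⟩ := hM
  have hMstar : s.IsStarIdeal M :=
    s.isStarIdeal_iff.mpr ⟨ne_bot_of_le_ne_bot hI.2.1.1 hIM, hMclosed⟩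
  have le_M {J : Ideal D} (hJtop : J ≠ ⊤) (hJ : s.IsStarIdeal J) (hIJ : I ≤ J) : J ≤ M :=
    hMub ⟨(s.isStarIdeal_iff.mp hJ).2, hJtop, hIJ⟩
  refine ⟨M, hI.coe_maxClosedIdeal, ⟨hMtop, hMstar, fun J hJtop hJ hMJ => ?_⟩, hIM, ?_⟩
  · exact (le_M hJtop hJ (hIM.trans hMJ)).antisymm hMJ
  · rintro M' ⟨hM'top, hM'star, hM'max⟩ hIM'
    exact (hM'max M hMtop hMstar (le_M hM'top hM'star hIM')).symm
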